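/- Let X be a geodesic metric space that is quasi-isometric to an ℝ-tree via an (L, C)-quasi-isometry. Then X satisfies the bottleneck property: there exists δ > 0 such that for all x, y ∈ X there is a point m with d(x,m) = d(m,y) = d(x,y)/2 and every continuous path from x to y in X passes within distance δ of m. -/

import Mathlib

/-!
Fix a point `p` of an ℝ-tree `T`. Being joined by an arc that avoids `p` is an equivalence relation
on `T \ {p}`, and by uniqueness of arcs the endpoints of a geodesic through `p` are not equivalent.
Points closer to each other than to `p` are equivalent, so a map from a connected space to `T`
whose local jumps have size at most `K` must come `K`-close to every point of a geodesic between
two of its values.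

Let `f : X → T` be a coarse embedding, `σ` a geodesic of `X` from `x` to `y` and `τ` the geodesic
from `f x` to `f y`. Every point of `τ` is close to `f ∘ σ`. Given a parameter `s`, connectedness of
`τ` yields a point of `τ` close both to some `f (σ r₁)` with `r₁ ≤ s` and to some `f (σ r₂)` with
`s ≤ r₂`; then `σ r₁` and `σ r₂` are close to each other, hence to `σ s`, so `f (σ s)` is close
to `τ`. For the midpoint `m` of `σ` and any path `γ` from `x` to `y`, the image `f ∘ γ` comes close
to the point of `τ` near `f m`, so `γ` comes close to `m`.
-/

section Arcs

open Set Function unitInterval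

variable {X : Type*} [TopologicalSpace X] {x y z : X} {F G : Set X}

/-- `x` and `y` are joined by an arc lying in `F`: the analogue of `JoinedIn` for injective paths.
Injectivity is only required when `x ≠ y`, so that the relation is reflexive on `F`. -/
def ArcJoinedIn (F : Set X) (x y : X) : Prop :=
  ∃ γ : Path x y, (∀ t, γ t ∈ F) ∧ (x ≠ y → Injective γ)

lemma injective_trans_of_range_inter_subset {α : Path x y} {β : Path y z} (hα : Injective α)
    (hβ : Injective β) (h : range α ∩ range β ⊆ {y}) : Injective (α.trans β) := by
  intro s t hst
  wlog hle : s ≤ t generalizing s t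
  · exact (this hst.symm (le_of_not_ge hle)).symm
  have hle' : (s : ℝ) ≤ t := hle
  rw [Path.trans_apply, Path.trans_apply] at hst
  split_ifs at hst with hs ht ht
  · have := Subtype.ext_iff.1 (hα hst)
    exact Subtype.ext (by linarith)
  · have hy := h ⟨mem_range_self _, _, hst.symm⟩
    have := Subtype.ext_iff.1 (hβ (hst.symm.trans (hy.trans β.source.symm)))
    simp only [Icc.coe_zero] at this
    linarith
  · linarith
  · have := Subtype.ext_iff.1 (hβ hst)
    exact Subtype.ext (by linarith)

lemma injective_subpath {γ : Path x y} (hγ : Injective γ) {s t : I} (hst : s ≠ t) :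
    Injective (γ.subpath s t) := by
  intro a b hab
  have hcomb : (1 - (a : ℝ)) * s + a * t = (1 - (b : ℝ)) * s + b * t :=
    Subtype.ext_iff.1 (hγ hab)
  have hne : (t : ℝ) - s ≠ 0 := sub_ne_zero.2 fun h => hst (Subtype.ext h.symm)
  exact Subtype.ext (mul_right_cancel₀ hne (by linarith))

namespace ArcJoinedIn

lemma source_mem (h : ArcJoinedIn F x y) : x ∈ F := by
  obtain ⟨γ, hγ, -⟩ := h
  simpa using hγ 0

lemma mono (h : ArcJoinedIn F x y) (hFG : F ⊆ G) : ArcJoinedIn G x y := by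
  obtain ⟨γ, hγ, hinj⟩ := h
  exact ⟨γ, fun t => hFG (hγ t), hinj⟩

lemma symm (h : ArcJoinedIn F x y) : ArcJoinedIn F y x := by
  obtain ⟨γ, hγ, hinj⟩ := h
  exact ⟨γ.symm, fun t => hγ _, fun hne => (hinj hne.symm).comp symm_bijective.injective⟩

lemma of_injective {γ : Path x y} (hγ : Injective γ) {s t : I} (hst : s ≤ t) :
    ArcJoinedIn (γ '' Icc s t) (γ s) (γ t) :=
  ⟨γ.subpath s t, fun r => γ.range_subpath_of_le s t hst ▸ mem_range_self r,
    fun hne => injective_subpath hγ fun h => hne (congrArg γ h)⟩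

lemma trans_of_inter_subset (hxy : ArcJoinedIn F x y) (hyz : ArcJoinedIn G y z)
    (h : F ∩ G ⊆ {y}) : ArcJoinedIn (F ∪ G) x z := by
  rcases eq_or_ne x y with rfl | hxy'
  · exact hyz.mono subset_union_right
  rcases eq_or_ne y z with rfl | hyz'
  · exact hxy.mono subset_union_left
  obtain ⟨α, hα, hαinj⟩ := hxy
  obtain ⟨β, hβ, hβinj⟩ := hyz
  have hrange : range α ∩ range β ⊆ {y} :=
    (inter_subset_inter (range_subset_iff.2 hα) (range_subset_iff.2 hβ)).trans h
  refine ⟨α.trans β, fun t => ?_, fun _ =>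
    injective_trans_of_range_inter_subset (hαinj hxy') (hβinj hyz') hrange⟩
  have ht : α.trans β t ∈ range α ∪ range β := α.trans_range β ▸ mem_range_self t
  exact union_subset_union (range_subset_iff.2 hα) (range_subset_iff.2 hβ) ht

/-- Follow the first arc until it first meets the second one, then follow the second one. -/
lemma trans [T2Space X] (hxy : ArcJoinedIn F x y) (hyz : ArcJoinedIn F y z) :
    ArcJoinedIn F x z := by
  rcases eq_or_ne x y with rfl | hxy'
  · exact hyz
  rcases eq_or_ne y z with rfl | hyz'
  · exact hxy
  obtain ⟨α, hα, hαinj⟩ := hxy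
  obtain ⟨β, hβ, hβinj⟩ := hyz
  have hclosed : IsClosed (α ⁻¹' range β) :=
    (isCompact_range β.continuous).isClosed.preimage α.continuous
  obtain ⟨s, ⟨t, ht⟩, hmin⟩ := hclosed.isCompact.exists_isLeast
    ⟨1, by rw [mem_preimage, α.target]; exact β.source_mem_range⟩
  have hαs : ArcJoinedIn (α '' Icc 0 s) x (α s) := by
    simpa only [α.source] using of_injective (hαinj hxy') (zero_le (a := s))
  have hβt : ArcJoinedIn (β '' Icc t 1) (α s) z := by
    simpa only [β.target, ht] using of_injective (hβinj hyz') (le_one' (t := t))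
  have hmeet : α '' Icc 0 s ∩ β '' Icc t 1 ⊆ {α s} := by
    rintro _ ⟨⟨r, hr, rfl⟩, r', -, hr'⟩
    exact congrArg α (le_antisymm hr.2 (hmin ⟨r', hr'⟩))
  refine (hαs.trans_of_inter_subset hβt hmeet).mono (union_subset ?_ ?_)
  · exact image_subset_iff.2 fun r _ => hα r
  · exact image_subset_iff.2 fun r _ => hβ r

end ArcJoinedIn

end Arcs

section Geodesics

open Set Function unitInterval

/-- A geodesic from `x` to `y`, parametrized by `[0, 1]` with constant speed `dist x y`. -/
def IsGeodesicPath {X : Type*} [PseudoMetricSpace X] {x y : X} (γ : Path x y) : Prop :=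
  ∀ s t, dist (γ s) (γ t) = dist s t * dist x y

/-- Any two points of a geodesic space are joined by a geodesic. -/
def IsGeodesicSpace (X : Type*) [PseudoMetricSpace X] : Prop :=
  ∀ x y : X, ∃ γ : Path x y, IsGeodesicPath γ

namespace IsGeodesicPath

section PseudoMetricSpace

variable {X : Type*} [PseudoMetricSpace X] {x y : X} {γ : Path x y}

lemma dist_left (hγ : IsGeodesicPath γ) (t : I) : dist x (γ t) = t * dist x y := by
  simpa [Subtype.dist_eq, Real.dist_eq, abs_of_nonneg t.2.1] using hγ 0 t

lemma dist_right (hγ : IsGeodesicPath γ) (t : I) : dist (γ t) y = (1 - t) * dist x y := by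
  simpa [Subtype.dist_eq, Real.dist_eq, abs_sub_comm (t : ℝ),
    abs_of_nonneg (one_minus_nonneg t)] using hγ t 1

lemma dist_le_of_le_of_le (hγ : IsGeodesicPath γ) {r s t : I} (hrs : r ≤ s) (hst : s ≤ t) :
    dist (γ s) (γ r) ≤ dist (γ r) (γ t) := by
  have hrs' : (r : ℝ) ≤ s := hrs
  have hst' : (s : ℝ) ≤ t := hst
  rw [hγ, hγ, dist_comm r t, Subtype.dist_eq, Subtype.dist_eq, Real.dist_eq, Real.dist_eq,
    abs_of_nonneg (sub_nonneg.2 hrs'), abs_of_nonneg (sub_nonneg.2 (hrs'.trans hst'))]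
  gcongr

end PseudoMetricSpace

variable {X : Type*} [MetricSpace X] {x y : X} {γ : Path x y}

lemma injective (hγ : IsGeodesicPath γ) (hxy : x ≠ y) : Injective γ := by
  intro s t hst
  have hzero : dist s t * dist x y = 0 := by rw [← hγ, hst, dist_self]
  exact dist_eq_zero.1 ((mul_eq_zero.1 hzero).resolve_right (dist_ne_zero.2 hxy))

end IsGeodesicPath

lemma IsGeodesicSpace.of_dist_eq_abs_sub {X : Type*} [PseudoMetricSpace X]
    (h : ∀ x y : X, ∃ γ : ℝ → X, γ 0 = x ∧ γ (dist x y) = y ∧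
      ∀ s ∈ Icc (0 : ℝ) (dist x y), ∀ t ∈ Icc (0 : ℝ) (dist x y), dist (γ s) (γ t) = |s - t|) :
    IsGeodesicSpace X := by
  intro x y
  obtain ⟨γ, h₀, h₁, hγ⟩ := h x y
  have hmem (t : I) : t * dist x y ∈ Icc 0 (dist x y) :=
    ⟨mul_nonneg t.2.1 dist_nonneg, mul_le_of_le_one_left dist_nonneg t.2.2⟩
  have hdist (s t : I) : dist (γ (s * dist x y)) (γ (t * dist x y)) = dist s t * dist x y := by
    rw [hγ _ (hmem s) _ (hmem t), ← sub_mul, abs_mul, abs_of_nonneg dist_nonneg,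
      Subtype.dist_eq, Real.dist_eq]
  have hlip : LipschitzWith (nndist x y) fun t : I => γ (t * dist x y) :=
    .of_dist_le_mul fun s t => by rw [hdist, coe_nndist, mul_comm]
  exact ⟨⟨⟨_, hlip.continuous⟩, by simp [h₀], by simp [h₁]⟩, hdist⟩

lemma IsGeodesicSpace.arcJoinedIn_compl_singleton {X : Type*} [MetricSpace X]
    (hX : IsGeodesicSpace X) {x y p : X} (h : dist x y < dist x p) : ArcJoinedIn {p}ᶜ x y := by
  obtain ⟨γ, hγ⟩ := hX x y
  refine ⟨γ, ?_, hγ.injective⟩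
  rintro t rfl
  rw [hγ.dist_left] at h
  exact h.not_ge (mul_le_of_le_one_left dist_nonneg t.2.2)

end Geodesics

section RealTrees

open Set Function Topology

/-- An ℝ-tree: a geodesic space in which two points are joined by at most one arc. -/
structure IsRealTree (T : Type*) [MetricSpace T] : Prop where
  isGeodesicSpace : IsGeodesicSpace T
  range_eq_of_injective : ∀ (x y : T) (γ₁ γ₂ : Path x y), Injective γ₁ → Injective γ₂ →
    range γ₁ = range γ₂

namespace IsRealTree

variable {T : Type*} [MetricSpace T] {x y : T} {τ : Path x y}

lemma not_arcJoinedIn_compl_singleton (hT : IsRealTree T) (hτ : IsGeodesicPath τ)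
    (u : unitInterval) : ¬ ArcJoinedIn {τ u}ᶜ x y := by
  intro h
  rcases eq_or_ne x y with rfl | hxy
  · have hu : dist x (τ u) = 0 := by rw [hτ.dist_left, dist_self, mul_zero]
    exact h.source_mem (dist_eq_zero.1 hu)
  · obtain ⟨α, hα, hαinj⟩ := h
    have hu : τ u ∈ range α :=
      hT.range_eq_of_injective x y τ α (hτ.injective hxy) (hαinj hxy) ▸ mem_range_self u
    obtain ⟨t, ht⟩ := hu
    exact hα t ht

lemma exists_dist_geodesicPath_le (hT : IsRealTree T) {S : Type*} [TopologicalSpace S]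
    [PreconnectedSpace S] {g : S → T} {K : ℝ} (hg : ∀ s, ∀ᶠ t in 𝓝 s, dist (g s) (g t) ≤ K)
    {s₀ s₁ : S} (h₀ : g s₀ = x) (h₁ : g s₁ = y) (hτ : IsGeodesicPath τ) (u : unitInterval) :
    ∃ s, dist (g s) (τ u) ≤ K := by
  by_contra! hfar
  refine hT.not_arcJoinedIn_compl_singleton hτ u ?_
  have hlocal (s : S) : ∀ᶠ t in 𝓝 s, ArcJoinedIn {τ u}ᶜ (g s) (g t) ∧
      ArcJoinedIn {τ u}ᶜ (g t) (g s) := by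
    filter_upwards [hg s] with t ht
    have harc := hT.isGeodesicSpace.arcJoinedIn_compl_singleton (ht.trans_lt (hfar s))
    exact ⟨harc, harc.symm⟩
  simpa only [h₀, h₁] using PreconnectedSpace.induction₂'
    (fun s t => ArcJoinedIn {τ u}ᶜ (g s) (g t)) hlocal ⟨fun _ _ _ => .trans⟩ s₀ s₁

end IsRealTree

end RealTrees

section CoarseEmbeddings

open Set Topology

/-- A coarse embedding: distances in the source and in the image control each other uniformly.
Quasi-isometric embeddings are the case of affine control. -/
structure IsCoarseEmbedding {X T : Type*} [PseudoMetricSpace X] [PseudoMetricSpace T]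
    (f : X → T) : Prop where
  exists_dist_map_le : ∀ r, ∃ R, ∀ x y, dist x y ≤ r → dist (f x) (f y) ≤ R
  exists_dist_le : ∀ r, ∃ R, ∀ x y, dist (f x) (f y) ≤ r → dist x y ≤ R

/-- The bottleneck property: up to a uniform distance `δ`, no path between two points can avoid a
suitable midpoint of them. -/
def BottleneckProperty (X : Type*) [PseudoMetricSpace X] : Prop :=
  ∃ δ : ℝ, 0 < δ ∧ ∀ x y : X, ∃ m : X,
    dist x m = dist x y / 2 ∧ dist m y = dist x y / 2 ∧
    ∀ γ : Path x y, ∃ t : unitInterval, dist (γ t) m ≤ δ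

lemma exists_near_before_and_after {T : Type*} [PseudoMetricSpace T] {x y : T} {τ : Path x y}
    {g : unitInterval → T} {r : ℝ} (h₀ : g 0 = x) (h₁ : g 1 = y)
    (hnear : ∀ u, ∃ s, dist (g s) (τ u) < r)
    (s : unitInterval) : ∃ u, (∃ a ≤ s, dist (g a) (τ u) < r) ∧ ∃ b ≥ s, dist (g b) (τ u) < r := by
  have hopen (J : Set unitInterval) : IsOpen {u | ∃ a ∈ J, dist (g a) (τ u) < r} := by
    simp only [ofPred_exists, ofPred_and]
    exact isOpen_iUnion fun a => isOpen_const.inter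
      (isOpen_lt (continuous_const.dist τ.continuous) continuous_const)
  have hr : 0 < r := let ⟨_, h⟩ := hnear 0; dist_nonneg.trans_lt h
  refine nonempty_inter (hopen (Iic s)) (hopen (Ici s)) ?_ ?_ ?_
  · refine eq_univ_of_forall fun u => ?_
    obtain ⟨a, ha⟩ := hnear u
    exact (le_total a s).imp (fun h => ⟨a, h, ha⟩) fun h => ⟨a, h, ha⟩
  · exact ⟨0, 0, unitInterval.nonneg', by simpa [h₀]⟩
  · exact ⟨1, 1, unitInterval.le_one', by simpa [h₁]⟩

namespace IsCoarseEmbedding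

lemma of_quasiIsometric {X T : Type*} [PseudoMetricSpace X] [PseudoMetricSpace T] {f : X → T}
    {L C : ℝ} (hL : 0 < L) (hf : ∀ x y : X, (1 / L) * dist x y - C ≤ dist (f x) (f y) ∧
      dist (f x) (f y) ≤ L * dist x y + C) : IsCoarseEmbedding f where
  exists_dist_map_le r := ⟨L * r + C, fun x y h => (hf x y).2.trans (by gcongr)⟩
  exists_dist_le r := by
    refine ⟨L * (r + C), fun x y h => ?_⟩
    have hlower : dist x y / L ≤ r + C := by linarith [(hf x y).1, one_div_mul_eq_div L (dist x y)]
    exact (div_le_iff₀' hL).1 hlower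

variable {X T : Type*} [PseudoMetricSpace X] [MetricSpace T] {f : X → T}

lemma exists_dist_map_path_le (hf : IsCoarseEmbedding f) (hT : IsRealTree T) :
    ∃ K, ∀ {x y : X} (γ : Path x y) {τ : Path (f x) (f y)}, IsGeodesicPath τ →
      ∀ u, ∃ t, dist (f (γ t)) (τ u) ≤ K := by
  obtain ⟨K, hK⟩ := hf.exists_dist_map_le 1
  refine ⟨K, fun {x y} γ τ hτ => ?_⟩
  have hjump (s : unitInterval) : ∀ᶠ t in 𝓝 s, dist (f (γ s)) (f (γ t)) ≤ K := by
    filter_upwards [γ.continuous.continuousAt (Metric.closedBall_mem_nhds (γ s) one_pos)] with t ht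
    exact hK _ _ (Metric.mem_closedBall'.1 ht)
  exact hT.exists_dist_geodesicPath_le hjump (congrArg f γ.source) (congrArg f γ.target) hτ

lemma exists_dist_map_geodesicPath_le (hf : IsCoarseEmbedding f) (hT : IsRealTree T) :
    ∃ R, ∀ {x y : X} {σ : Path x y} {τ : Path (f x) (f y)}, IsGeodesicPath σ → IsGeodesicPath τ →
      ∀ s, ∃ u, dist (f (σ s)) (τ u) ≤ R := by
  obtain ⟨K, hK⟩ := hf.exists_dist_map_path_le hT
  obtain ⟨M, hM⟩ := hf.exists_dist_le (2 * (K + 1))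
  obtain ⟨N, hN⟩ := hf.exists_dist_map_le M
  refine ⟨N + (K + 1), fun {x y σ τ} hσ hτ s => ?_⟩
  have hnear (u : unitInterval) : ∃ t, dist (f (σ t)) (τ u) < K + 1 :=
    (hK σ hτ u).imp fun _ h => h.trans_lt (lt_add_one K)
  obtain ⟨u, ⟨a, has, ha⟩, b, hsb, hb⟩ := exists_near_before_and_after
    (congrArg f σ.source) (congrArg f σ.target) hnear s
  have hab : dist (f (σ a)) (f (σ b)) ≤ 2 * (K + 1) := by
    linarith [dist_triangle_right (f (σ a)) (f (σ b)) (τ u)]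
  have hsa : dist (σ s) (σ a) ≤ M := (hσ.dist_le_of_le_of_le has hsb).trans (hM _ _ hab)
  exact ⟨u, (dist_triangle _ (f (σ a)) _).trans (add_le_add (hN _ _ hsa) ha.le)⟩

end IsCoarseEmbedding

theorem bottleneck_of_quasiIsometric_to_real_tree_general {X T : Type*} [PseudoMetricSpace X]
    [MetricSpace T] (hX : IsGeodesicSpace X) (hT : IsRealTree T) {f : X → T}
    (hf : IsCoarseEmbedding f) : BottleneckProperty X := by
  obtain ⟨K, hK⟩ := hf.exists_dist_map_path_le hT
  obtain ⟨R, hR⟩ := hf.exists_dist_map_geodesicPath_le hT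
  obtain ⟨δ, hδ⟩ := hf.exists_dist_le (K + R)
  refine ⟨max δ 1, by positivity, fun x y => ?_⟩
  obtain ⟨σ, hσ⟩ := hX x y
  obtain ⟨τ, hτ⟩ := hT.isGeodesicSpace (f x) (f y)
  let half : unitInterval := ⟨1 / 2, by norm_num, by norm_num⟩
  refine ⟨σ half, ?_, ?_, fun γ => ?_⟩
  · rw [hσ.dist_left]; ring
  · rw [hσ.dist_right]; ring
  obtain ⟨u, hu⟩ := hR hσ hτ half
  obtain ⟨t, ht⟩ := hK γ hτ u
  have hfar : dist (f (γ t)) (f (σ half)) ≤ K + R :=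
    (dist_triangle_right _ _ (τ u)).trans (add_le_add ht hu)
  exact ⟨t, (hδ _ _ hfar).trans (le_max_left δ 1)⟩

end CoarseEmbeddings

/-- a geodesic metric space `(L,C)`-quasi-isometric to an ℝ-tree satisfies the
bottleneck property. -/
theorem bottleneck_of_quasiIsometric_to_real_tree {X T : Type*}
    [MetricSpace X] [MetricSpace T]
    (hXgeo : ∀ x y : X, ∃ γ : ℝ → X, γ 0 = x ∧ γ (dist x y) = y ∧
      ∀ s ∈ Set.Icc (0 : ℝ) (dist x y), ∀ t ∈ Set.Icc (0 : ℝ) (dist x y),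
        dist (γ s) (γ t) = |s - t|)
    (hTgeo : ∀ x y : T, ∃ γ : ℝ → T, γ 0 = x ∧ γ (dist x y) = y ∧
      ∀ s ∈ Set.Icc (0 : ℝ) (dist x y), ∀ t ∈ Set.Icc (0 : ℝ) (dist x y),
        dist (γ s) (γ t) = |s - t|)
    (hTuniq : ∀ (x y : T) (γ₁ γ₂ : Path x y), Function.Injective γ₁ →
      Function.Injective γ₂ → Set.range γ₁ = Set.range γ₂)
    (L C : ℝ) (hL : 1 ≤ L) (hC : 0 ≤ C) (f : X → T)
    (hqi : ∀ x y : X, (1 / L) * dist x y - C ≤ dist (f x) (f y) ∧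
      dist (f x) (f y) ≤ L * dist x y + C)
    (honto : ∀ t : T, ∃ x : X, dist t (f x) ≤ C) :
    ∃ δ : ℝ, 0 < δ ∧ ∀ x y : X, ∃ m : X,
      dist x m = dist x y / 2 ∧ dist m y = dist x y / 2 ∧
      ∀ γ : Path x y, ∃ t : unitInterval, dist (γ t) m ≤ δ := by
  exact bottleneck_of_quasiIsometric_to_real_tree_general (.of_dist_eq_abs_sub hXgeo)
    ⟨.of_dist_eq_abs_sub hTgeo, hTuniq⟩ (.of_quasiIsometric (one_pos.trans_le hL) hqi)
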